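/- Let M and N be weight sequences and assume that N is log-convex. If there exist c > 0 and d > 0 such that H^∞_{v_{M,c}}(ℂ) ⊆ H^∞_{v_{N,d}}(ℂ) as sets, then N ≼ M, i.e. sup_{j≥1} (N_j/M_j)^{1/j} < ∞. -/

import Mathlib

open Filter Set

/-- The associated weight function `ω_M(t) = sup_j log(t^j / M_j)` for `t ≠ 0`, `ω_M(0) = 0`. -/
noncomputable def omegaM (M : ℕ → ℝ) (t : ℝ) : ℝ :=
  if t = 0 then 0 else ⨆ j : ℕ, Real.log (t ^ j / M j)

/-- `v_M(t) = exp(-ω_M(t))`. -/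
noncomputable def vM (M : ℕ → ℝ) (t : ℝ) : ℝ :=
  Real.exp (-(omegaM M t))

/-- `v_{M,c}(t) = exp(-ω_M(c·t))`. -/
noncomputable def vMc (M : ℕ → ℝ) (c t : ℝ) : ℝ :=
  Real.exp (-(omegaM M (c * t)))

/-- `v_M^c(t) = exp(-c·ω_M(t))`. -/
noncomputable def vMpow (M : ℕ → ℝ) (c t : ℝ) : ℝ :=
  Real.exp (-(c * omegaM M t))

/-- A weight sequence: positive, `M_0 = 1`, `(M_j)^{1/j} → ∞`. -/
def WeightSeq (M : ℕ → ℝ) : Prop :=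
  (∀ j, 0 < M j) ∧ M 0 = 1 ∧
    Tendsto (fun j : ℕ => (M j) ^ (1 / (j : ℝ))) atTop atTop

/-- Log-convexity: `M_j² ≤ M_{j-1}·M_{j+1}` for `j ≥ 1`. -/
def LogConvexSeq (M : ℕ → ℝ) : Prop :=
  ∀ j : ℕ, 1 ≤ j → (M j) ^ 2 ≤ M (j - 1) * M (j + 1)

/-- The class `LC`: normalized log-convex weight sequences. -/
def LCset (M : ℕ → ℝ) : Prop :=
  WeightSeq M ∧ LogConvexSeq M ∧ 1 ≤ M 1

/-- Weighted space of entire functions with `sup |f(z)|·v(|z|) < ∞`. -/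
def Hinf (v : ℝ → ℝ) : Set (ℂ → ℂ) :=
  {f | Differentiable ℂ f ∧
    ∃ C : ℝ, ∀ z : ℂ, ‖f z‖ * v ‖z‖ ≤ C}

/-- The weighted sup-norm `‖f‖_v`. -/
noncomputable def wnorm (v : ℝ → ℝ) (f : ℂ → ℂ) : ℝ :=
  ⨆ z : ℂ, ‖f z‖ * v ‖z‖

/-- A weight: strictly positive, continuous, non-increasing and rapidly
decreasing on `[0,∞)`. -/
def IsWeight (v : ℝ → ℝ) : Prop :=
  (∀ t : ℝ, 0 ≤ t → 0 < v t) ∧ ContinuousOn v (Set.Ici 0) ∧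
    AntitoneOn v (Set.Ici 0) ∧
    ∀ k : ℕ, Tendsto (fun t : ℝ => t ^ k * v t) atTop (nhds 0)

/-- A normalized weight: `v ≡ 1` on `[0,1]`. -/
def NormalizedWeight (v : ℝ → ℝ) : Prop :=
  ∀ t : ℝ, 0 ≤ t → t ≤ 1 → v t = 1

/-- A (log-)convex weight: `t ↦ -log v(eᵗ)` is convex on `ℝ`. -/
def ConvexWeight (v : ℝ → ℝ) : Prop :=
  ConvexOn ℝ Set.univ fun t : ℝ => -Real.log (v (Real.exp t))

/-- Moderate growth for a weight: `v(H·t) ≤ e^H · v(t)²`. -/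
def ModerateGrowthW (v : ℝ → ℝ) : Prop :=
  ∃ H : ℝ, 1 ≤ H ∧ ∀ t : ℝ, 0 ≤ t → v (H * t) ≤ Real.exp H * (v t) ^ 2

/-- Moderate growth (mg) for a sequence: `M_{j+k} ≤ C^{j+k}·M_j·M_k`. -/
def MGseq (M : ℕ → ℝ) : Prop :=
  ∃ C : ℝ, 1 ≤ C ∧ ∀ j k : ℕ, M (j + k) ≤ C ^ (j + k) * M j * M k

/-- The associated weight sequence `M^v_j = sup_{t>0} t^j·v(t)`. -/
noncomputable def assocSeq (v : ℝ → ℝ) (j : ℕ) : ℝ :=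
  ⨆ t : Set.Ioi (0 : ℝ), (t : ℝ) ^ j * v t

/-- The unit ball `B_{1/v}(ℂ)` of entire functions bounded by `1/v`. -/
def BClass (v : ℝ → ℝ) : Set (ℂ → ℂ) :=
  {f | Differentiable ℂ f ∧ ∀ z : ℂ, ‖f z‖ ≤ 1 / v ‖z‖}

/-- The associated growth condition `w̃_v(z) = sup{|f(z)| : f ∈ B_{1/v}}`. -/
noncomputable def wTilde (v : ℝ → ℝ) (z : ℂ) : ℝ :=
  sSup {x : ℝ | ∃ f ∈ BClass v, x = ‖f z‖}

/-- The associated weight `ṽ = 1/w̃_v`, as a function of `t = |z|`. -/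
noncomputable def vTilde (v : ℝ → ℝ) (t : ℝ) : ℝ :=
  1 / wTilde v (t : ℂ)

/-- An essential weight: `v ∼ ṽ`. -/
def Essential (v : ℝ → ℝ) : Prop :=
  ∃ C : ℝ, 1 ≤ C ∧ ∀ t : ℝ, 0 ≤ t →
    v t ≤ C * vTilde v t ∧ vTilde v t ≤ C * v t

/-- `P_v(t) = sup_j t^j/‖z^j‖_v`. -/
noncomputable def Pfun (v : ℝ → ℝ) (t : ℝ) : ℝ :=
  ⨆ j : ℕ, t ^ j / wnorm v fun z : ℂ => z ^ j

/-- The convolved sequence `(M⋆N)_j = min_{0≤k≤j} M_k·N_{j-k}`. -/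
noncomputable def convSeq (M N : ℕ → ℝ) (j : ℕ) : ℝ :=
  (Finset.range (j + 1)).inf' Finset.nonempty_range_add_one fun k => M k * N (j - k)

theorem aux_ratio_mono (N : ℕ → ℝ) (hp : ∀ j, 0 < N j) (h : LogConvexSeq N) :
    Monotone (fun k => N (k + 1) / N k) := by
  apply monotone_nat_of_le_succ
  intro n
  rw [div_le_div_iff₀ (hp _) (hp _)]
  have := h (n + 1) (by omega)
  simp only [Nat.add_sub_cancel] at this
  nlinarith

theorem aux_max (N : ℕ → ℝ) (hp : ∀ j, 0 < N j) (h : LogConvexSeq N) (n k : ℕ) :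
    (N (n + 1) / N n) ^ k / N k ≤ (N (n + 1) / N n) ^ (n + 1) / N (n + 1) := by
  have hm := aux_ratio_mono N hp h
  set t := N (n + 1) / N n with ht
  have htp : 0 < t := div_pos (hp _) (hp _)
  rcases le_total k (n + 1) with hk | hk
  · have key : ∀ i, ∀ k, k + i = n + 1 → t ^ k / N k ≤ t ^ (n + 1) / N (n + 1) := by
      intro i
      induction i with
      | zero => intro k hk; have : k = n + 1 := by omega
                subst this; exact le_rfl
      | succ i ih =>
        intro k hk
        refine le_trans ?_ (ih (k + 1) (by omega))
        have h1 : N (k + 1) / N k ≤ t := hm (show k ≤ n by omega)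
        rw [div_le_iff₀ (hp k)] at h1
        rw [div_le_div_iff₀ (hp _) (hp _), pow_succ]
        have := pow_pos htp k
        nlinarith
    exact key (n + 1 - k) k (by omega)
  · induction k, hk using Nat.le_induction with
    | base => exact le_rfl
    | succ k hk ih =>
      refine le_trans ?_ ih
      have h1 : t ≤ N (k + 1) / N k := hm (show n ≤ k by omega)
      rw [le_div_iff₀ (hp k)] at h1
      rw [div_le_div_iff₀ (hp _) (hp _), pow_succ]
      have := pow_pos htp k
      nlinarith

theorem aux_bdd (M : ℕ → ℝ) (hM : WeightSeq M) (t : ℝ) (ht : 0 < t) :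
    BddAbove (Set.range fun j : ℕ => Real.log (t ^ j / M j)) := by
  obtain ⟨hp, -, hT⟩ := hM
  have h1 := (hT.eventually_ge_atTop t).and (eventually_ge_atTop 1)
  have h2 : ∀ᶠ j in atTop, Real.log (t ^ j / M j) ≤ 0 := by
    filter_upwards [h1] with j hj
    obtain ⟨hj, hj1⟩ := hj
    have h3 : t ^ j ≤ M j := by
      calc t ^ j ≤ (M j ^ (1 / (j : ℝ))) ^ j := by gcongr
        _ = M j := by
          rw [one_div]; exact Real.rpow_inv_natCast_pow (hp j).le (by omega)
    apply Real.log_nonpos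
    · have := hp j; positivity
    · exact (div_le_one (hp j)).2 h3
  exact (isBoundedUnder_of_eventually_le h2).bddAbove_range

theorem aux_term (M : ℕ → ℝ) (hM : WeightSeq M) (t : ℝ) (ht : 0 ≤ t) (j : ℕ) :
    t ^ j / M j ≤ Real.exp (omegaM M t) := by
  have hp := hM.1
  rcases ht.eq_or_lt with rfl | ht
  · simp only [omegaM, if_true, Real.exp_zero]
    rcases j with _ | j
    · simp [hM.2.1]
    · simp
  · have h0 : 0 < t ^ j / M j := div_pos (pow_pos ht _) (hp j)
    rw [← Real.log_le_iff_le_exp h0, omegaM, if_neg ht.ne']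
    exact le_ciSup (aux_bdd M hM t ht) j

theorem aux_norm (M : ℕ → ℝ) (hM : WeightSeq M) (c : ℝ) (hc : 0 < c) (z : ℂ) (r : ℝ)
    (hz : ‖z‖ ≤ r) (j : ℕ) :
    ‖((c / 2 : ℝ) * z) ^ j / (M j : ℂ)‖ ≤ Real.exp (omegaM M (c * r)) * (1 / 2) ^ j := by
  have hp := hM.1 j
  have hr : 0 ≤ r := (norm_nonneg z).trans hz
  have h1 := aux_term M hM (c * r) (by positivity) j
  rw [norm_div, norm_pow, norm_mul, Complex.norm_real, Complex.norm_real,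
    Real.norm_of_nonneg hp.le, Real.norm_of_nonneg (by positivity : (0:ℝ) ≤ c / 2)]
  calc (c / 2 * ‖z‖) ^ j / M j ≤ (c / 2 * r) ^ j / M j := by gcongr
    _ = (c * r) ^ j / M j * (1 / 2) ^ j := by
      rw [show c / 2 * r = (c * r) * (1 / 2) by ring, mul_pow]; ring
    _ ≤ _ := by gcongr

theorem aux_mem (M : ℕ → ℝ) (hM : WeightSeq M) (c : ℝ) (hc : 0 < c) :
    (fun z : ℂ => ∑' j : ℕ, ((c / 2 : ℝ) * z) ^ j / (M j : ℂ)) ∈ Hinf (vMc M c) := by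
  constructor
  · intro z
    have hd : DifferentiableOn ℂ (fun z : ℂ => ∑' j : ℕ, ((c / 2 : ℝ) * z) ^ j / (M j : ℂ))
        (Metric.ball 0 (‖z‖ + 1)) := by
      apply Complex.differentiableOn_tsum_of_summable_norm
        (u := fun j => Real.exp (omegaM M (c * (‖z‖ + 1))) * (1 / 2) ^ j)
      · exact summable_geometric_two.mul_left _
      · intro j; fun_prop
      · exact Metric.isOpen_ball
      · intro j w hw
        exact aux_norm M hM c hc w _ (by simpa using (mem_ball_zero_iff.1 hw).le) j
    exact hd.differentiableAt (Metric.isOpen_ball.mem_nhds (by simp))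
  · refine ⟨2, fun z => ?_⟩
    have h1 : ‖∑' j : ℕ, ((c / 2 : ℝ) * z) ^ j / (M j : ℂ)‖
        ≤ Real.exp (omegaM M (c * ‖z‖)) * 2 :=
      tsum_of_norm_bounded (hasSum_geometric_two.mul_left _)
        (fun j => aux_norm M hM c hc z _ le_rfl j)
    calc _ ≤ Real.exp (omegaM M (c * ‖z‖)) * 2 * vMc M c ‖z‖ := by
          apply mul_le_mul_of_nonneg_right h1 (Real.exp_pos _).le
      _ = 2 := by
          rw [vMc, Real.exp_neg]
          field_simp

theorem aux_lower (M : ℕ → ℝ) (hM : WeightSeq M) (c : ℝ) (hc : 0 < c) (t : ℝ) (ht : 0 ≤ t)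
    (j : ℕ) : (c / 2 * t) ^ j / M j ≤
      ‖∑' j : ℕ, ((c / 2 : ℝ) * (t : ℂ)) ^ j / (M j : ℂ)‖ := by
  have hp := hM.1
  have hs : Summable fun j : ℕ => (c / 2 * t) ^ j / M j := by
    have : Summable fun j : ℕ => ‖((c / 2 : ℝ) * (t : ℂ)) ^ j / (M j : ℂ)‖ :=
      Summable.of_nonneg_of_le (fun _ => norm_nonneg _)
        (fun j => aux_norm M hM c hc t _ le_rfl j) (summable_geometric_two.mul_left _)
    refine this.congr fun j => ?_
    rw [← Complex.ofReal_mul, ← Complex.ofReal_pow, ← Complex.ofReal_div, Complex.norm_real,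
      Real.norm_of_nonneg]
    have := hp j
    positivity
  have hnn : ∀ j, 0 ≤ (c / 2 * t) ^ j / M j := fun j => by have := hp j; positivity
  have he : (∑' j : ℕ, ((c / 2 : ℝ) * (t : ℂ)) ^ j / (M j : ℂ))
      = ((∑' j : ℕ, (c / 2 * t) ^ j / M j : ℝ) : ℂ) := by
    push_cast; rfl
  rw [he, Complex.norm_real, Real.norm_of_nonneg (tsum_nonneg hnn)]
  exact hs.le_tsum j (fun i _ => hnn i)

/-- Proposition: for weight sequences `M`, `N` with `N` log-convex, if
`H^∞_{v_{M,c}}(ℂ) ⊆ H^∞_{v_{N,d}}(ℂ)` for some `c, d > 0`, then `N ≼ M`. -/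
theorem stmt8 (M N : ℕ → ℝ) (hM : WeightSeq M) (hN : WeightSeq N)
    (hNlc : LogConvexSeq N)
    (h : ∃ c : ℝ, 0 < c ∧ ∃ d : ℝ, 0 < d ∧ Hinf (vMc M c) ⊆ Hinf (vMc N d)) :
    ∃ S : ℝ, ∀ j : ℕ, 1 ≤ j → (N j / M j) ^ (1 / (j : ℝ)) ≤ S := by
  obtain ⟨c, hc, d, hd, hsub⟩ := h
  obtain ⟨-, C, hC⟩ := hsub (aux_mem M hM c hc)
  have hMp := hM.1
  have hNp := hN.1
  refine ⟨max C 1 * (2 * d / c), fun j hj => ?_⟩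
  obtain ⟨n, rfl⟩ : ∃ n, j = n + 1 := ⟨j - 1, by omega⟩
  set s := N (n + 1) / N n with hs
  have hsp : 0 < s := div_pos (hNp _) (hNp _)
  have h1 := hC ((s / d : ℝ) : ℂ)
  have h2 := aux_lower M hM c hc (s / d) (by positivity) (n + 1)
  rw [Complex.norm_real, Real.norm_of_nonneg (by positivity : 0 ≤ s / d)] at h1
  have hom : Real.exp (omegaM N s) ≤ s ^ (n + 1) / N (n + 1) := by
    have h0 : 0 < s ^ (n + 1) / N (n + 1) := div_pos (pow_pos hsp _) (hNp _)
    rw [← Real.le_log_iff_exp_le h0, omegaM, if_neg hsp.ne']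
    exact ciSup_le fun k => Real.log_le_log (div_pos (pow_pos hsp _) (hNp _))
      (aux_max N hNp hNlc n k)
  rw [vMc, mul_div_cancel₀ _ hd.ne', Real.exp_neg, ← div_eq_mul_inv,
    div_le_iff₀ (Real.exp_pos _)] at h1
  set D := max C 1 with hD
  have hD1 : 1 ≤ D := le_max_right _ _
  have h3 : (c / 2 * (s / d)) ^ (n + 1) / M (n + 1) ≤ D * (s ^ (n + 1) / N (n + 1)) := by
    refine h2.trans (h1.trans ?_)
    have : C ≤ D := le_max_left _ _
    gcongr
  have h4 : N (n + 1) / M (n + 1) ≤ D * (2 * d / c) ^ (n + 1) := by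
    have hx : (2 * d / c) ^ (n + 1) * (c / 2 * (s / d)) ^ (n + 1) = s ^ (n + 1) := by
      rw [← mul_pow]; congr 1; field_simp
    have hy : 0 < s ^ (n + 1) := pow_pos hsp _
    have hm := hMp (n + 1)
    have hn := hNp (n + 1)
    have h5 := mul_le_mul_of_nonneg_left h3
      (by positivity : 0 ≤ (2 * d / c) ^ (n + 1) * (N (n + 1) / s ^ (n + 1)))
    have e1 : (2 * d / c) ^ (n + 1) * (N (n + 1) / s ^ (n + 1)) *
        ((c / 2 * (s / d)) ^ (n + 1) / M (n + 1)) = N (n + 1) / M (n + 1) := by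
      calc _ = ((2 * d / c) ^ (n + 1) * (c / 2 * (s / d)) ^ (n + 1)) / s ^ (n + 1)
            * (N (n + 1) / M (n + 1)) := by ring
        _ = _ := by rw [hx, div_self hy.ne', one_mul]
    have e2 : (2 * d / c) ^ (n + 1) * (N (n + 1) / s ^ (n + 1)) *
        (D * (s ^ (n + 1) / N (n + 1))) = D * (2 * d / c) ^ (n + 1) := by
      have := hy.ne'
      generalize s ^ (n + 1) = y at *
      generalize (2 * d / c) ^ (n + 1) = x at *
      field_simp
    rwa [e1, e2] at h5
  have h6 : N (n + 1) / M (n + 1) ≤ (D * (2 * d / c)) ^ (n + 1) := by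
    refine h4.trans ?_
    rw [mul_pow]
    gcongr
    exact le_self_pow₀ hD1 (by omega)
  have hq : 0 ≤ N (n + 1) / M (n + 1) := (div_pos (hNp _) (hMp _)).le
  calc _ ≤ ((D * (2 * d / c)) ^ (n + 1)) ^ (1 / ((n + 1 : ℕ) : ℝ)) :=
        Real.rpow_le_rpow hq h6 (by positivity)
    _ = _ := by
      rw [one_div]
      exact Real.pow_rpow_inv_natCast (by positivity) (by omega)
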